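/- Let (X,Σ,μ,T) be an ergodic measure-preserving ℤ^d-system. Then H_ap^c = H_ms; that is, a function f ∈ L²(X,μ) is almost periodic if and only if it is not μ-mean sensitive. -/

import Mathlib

open MeasureTheory Filter Finset Metric
open scoped Classical

noncomputable section

/-- The box `{0,…,n−1}^d` inside `ℤ^d`. -/
def Fbox (d n : ℕ) : Finset (Fin d → ℤ) :=
  Fintype.piFinset fun _ => Finset.Icc (0 : ℤ) ((n : ℤ) - 1)

/-- Upper density of a subset of `ℤ^d` along the boxes `F_n`. -/
def upperDensity (d : ℕ) (S : Set (Fin d → ℤ)) : ℝ :=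
  Filter.limsup
    (fun n : ℕ => (((Fbox d n).filter (fun j => j ∈ S)).card : ℝ) / ((Fbox d n).card : ℝ))
    Filter.atTop

/-- Lower density of a subset of `ℤ^d` along the boxes `F_n`. -/
def lowerDensity (d : ℕ) (S : Set (Fin d → ℤ)) : ℝ :=
  Filter.liminf
    (fun n : ℕ => (((Fbox d n).filter (fun j => j ∈ S)).card : ℝ) / ((Fbox d n).card : ℝ))
    Filter.atTop

variable {X : Type*}

/-- The pseudometric `d_f(x,y) = limsup_n ((1/|F_n|) Σ_{j∈F_n} |f(T^j x) − f(T^j y)|²)^{1/2}`. -/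
def dF {d : ℕ} (T : (Fin d → ℤ) → X → X) (f : X → ℂ) (x y : X) : ℝ :=
  Filter.limsup (fun n : ℕ =>
    Real.sqrt ((∑ j ∈ Fbox d n, ‖f (T j x) - f (T j y)‖ ^ 2) / ((Fbox d n).card : ℝ)))
    Filter.atTop

/-- `x` is a generic point for `|f|²`:
the Birkhoff averages of `|f|²` along `x` converge to `∫ |f|² dμ`. -/
def genericSq {d : ℕ} [MeasurableSpace X] (μ : Measure X) (T : (Fin d → ℤ) → X → X)
    (f : X → ℂ) (x : X) : Prop :=
  Filter.Tendsto
    (fun n : ℕ => (∑ j ∈ Fbox d n, ‖f (T j x)‖ ^ 2) / ((Fbox d n).card : ℝ))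
    Filter.atTop (nhds (∫ y, ‖f y‖ ^ 2 ∂μ))

/-- `ε` is a `μ`-sensitivity constant for `f`: every positive measure set contains two
generic points `x, y` with `d_f(x,y) > ε`. -/
def SensitivityConstant {d : ℕ} [MeasurableSpace X] (μ : Measure X)
    (T : (Fin d → ℤ) → X → X) (f : X → ℂ) (ε : ℝ) : Prop :=
  0 < ε ∧ ∀ A : Set X, MeasurableSet A → 0 < μ A →
    ∃ x ∈ A, ∃ y ∈ A, genericSq μ T f x ∧ genericSq μ T f y ∧ ε < dF T f x y

/-- `f` is `μ`-mean sensitive (`f ∈ H_ms`). -/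
def MeanSensitiveFun {d : ℕ} [MeasurableSpace X] (μ : Measure X)
    (T : (Fin d → ℤ) → X → X) (f : X → ℂ) : Prop :=
  ∃ ε : ℝ, SensitivityConstant μ T f ε

/-- `f` is almost periodic (`f ∈ H_ap`): the closure of the orbit `{f ∘ T^j : j ∈ ℤ^d}`
in `L²(X,μ)` is compact. -/
def APFun {d : ℕ} [MeasurableSpace X] (μ : Measure X)
    (T : (Fin d → ℤ) → X → X) (f : X → ℂ) : Prop :=
  IsCompact (closure {g : Lp ℂ 2 μ | ∃ j : Fin d → ℤ, (g : X → ℂ) =ᵐ[μ] f ∘ T j})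



open scoped ENNReal Topology

lemma Fbox_mem {d n : ℕ} {k : Fin d → ℤ} : k ∈ Fbox d n ↔ ∀ c, 0 ≤ k c ∧ k c < n := by
  simp only [Fbox, Fintype.mem_piFinset, Finset.mem_Icc]
  constructor <;> intro h c <;> have := h c <;> omega

lemma Fbox_card (d n : ℕ) : (Fbox d n).card = n ^ d := by
  simp [Fbox, Fintype.card_piFinset]

lemma cover_aux (d : ℕ) (a : (Fin d → ℤ) → ℝ≥0∞) (lam : ℝ≥0∞) (n : (Fin d → ℤ) → ℕ) :
    ∀ J : Finset (Fin d → ℤ), (∀ i ∈ J, 1 ≤ n i) →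
    (∀ i ∈ J, lam * (n i : ℝ≥0∞) ^ d ≤ ∑ k ∈ Fbox d (n i), a (k + i)) →
    lam * (J.card : ℝ≥0∞) ≤
      2 ^ d * ∑ k ∈ J.biUnion (fun i => (Fbox d (n i)).image (fun k => k + i)), a k := by
  intro J
  induction J using Finset.strongInduction with
  | H J ih =>
  intro h1 h2
  rcases J.eq_empty_or_nonempty with rfl | hJ
  · simp
  obtain ⟨i0, hi0, hmax⟩ := Finset.exists_max_image J n hJ
  set J' := J.filter (fun i => ¬ ∀ c, |i c - i0 c| < n i0) with hJ'
  have hsub : J' ⊂ J := by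
    refine Finset.filter_ssubset.2 ⟨i0, hi0, ?_⟩
    have := h1 i0 hi0
    simp; omega
  have hIH := ih J' hsub (fun i hi => h1 i (hsub.1 hi)) (fun i hi => h2 i (hsub.1 hi))
  have hcard : (J.filter (fun i => ∀ c, |i c - i0 c| < n i0)).card ≤ (2 * n i0) ^ d := by
    calc _ ≤ (Fintype.piFinset (fun c => Finset.Ioo (i0 c - n i0) (i0 c + n i0))).card := by
          apply Finset.card_le_card
          intro i hi
          simp only [Finset.mem_filter, abs_lt] at hi
          simp only [Fintype.mem_piFinset, Finset.mem_Ioo]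
          intro c
          have := hi.2 c
          omega
      _ = ∏ c : Fin d, ((i0 c + n i0) - (i0 c - n i0) - 1).toNat := by
          simp [Fintype.card_piFinset]
      _ ≤ ∏ c : Fin d, (2 * n i0) := by
          apply Finset.prod_le_prod'
          intro c _
          omega
      _ = _ := by simp
  have hsplit : J.card = (J.filter (fun i => ∀ c, |i c - i0 c| < n i0)).card + J'.card :=
    (Finset.card_filter_add_card_filter_not _).symm
  have hdisj : Disjoint ((Fbox d (n i0)).image (fun k => k + i0))
      (J'.biUnion (fun i => (Fbox d (n i)).image (fun k => k + i))) := by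
    rw [Finset.disjoint_left]
    intro k hk hk'
    simp only [Finset.mem_biUnion, Finset.mem_image, Fbox_mem] at hk hk'
    obtain ⟨p, hp, rfl⟩ := hk
    obtain ⟨i, hi, q, hq, hqe⟩ := hk'
    have hi' := (Finset.mem_filter.1 hi)
    apply hi'.2
    intro c
    have e := congrFun hqe c
    simp only [Pi.add_apply] at e
    have a1 := hp c
    have a2 := hq c
    have a3 := hmax i hi'.1
    rw [abs_lt]
    constructor <;> omega
  have hunion : ((Fbox d (n i0)).image (fun k => k + i0)) ∪
      (J'.biUnion (fun i => (Fbox d (n i)).image (fun k => k + i))) ⊆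
      J.biUnion (fun i => (Fbox d (n i)).image (fun k => k + i)) := by
    apply Finset.union_subset
    · exact Finset.subset_biUnion_of_mem (fun i => (Fbox d (n i)).image (fun k => k + i)) hi0
    · exact Finset.biUnion_subset_biUnion_of_subset_left _ hsub.1
  calc lam * (J.card : ℝ≥0∞)
      = lam * ((J.filter (fun i => ∀ c, |i c - i0 c| < n i0)).card : ℝ≥0∞)
        + lam * (J'.card : ℝ≥0∞) := by rw [hsplit]; push_cast; ring
    _ ≤ lam * (((2 * n i0) ^ d : ℕ) : ℝ≥0∞) + 2 ^ d *
          ∑ k ∈ J'.biUnion (fun i => (Fbox d (n i)).image (fun k => k + i)), a k := by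
        gcongr
    _ = 2 ^ d * (lam * (n i0 : ℝ≥0∞) ^ d) + 2 ^ d *
          ∑ k ∈ J'.biUnion (fun i => (Fbox d (n i)).image (fun k => k + i)), a k := by
        push_cast; ring
    _ ≤ 2 ^ d * (∑ k ∈ Fbox d (n i0), a (k + i0)) + 2 ^ d *
          ∑ k ∈ J'.biUnion (fun i => (Fbox d (n i)).image (fun k => k + i)), a k := by
        gcongr
        exact h2 i0 hi0
    _ = 2 ^ d * ∑ k ∈ ((Fbox d (n i0)).image (fun k => k + i0)) ∪
      (J'.biUnion (fun i => (Fbox d (n i)).image (fun k => k + i))), a k := by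
        rw [Finset.sum_union hdisj, Finset.sum_image, mul_add]
        intro x _ y _ h
        exact add_right_cancel h
    _ ≤ _ := by
        gcongr

variable {Y : Type*} [MeasurableSpace Y]

lemma maximal_N {d : ℕ} (ν : Measure Y) (S : (Fin d → ℤ) → Y → Y)
    (hS : ∀ j, MeasurePreserving (S j) ν ν) (hadd : ∀ i j, S (i + j) = S i ∘ S j)
    (g : Y → ℝ≥0∞) (hg : Measurable g) (lam : ℝ≥0∞) (N : ℕ) :
    lam * ν {y | ∃ n : ℕ, 1 ≤ n ∧ n ≤ N ∧ lam * (n : ℝ≥0∞) ^ d ≤ ∑ k ∈ Fbox d n, g (S k y)}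
      ≤ 4 ^ d * ∫⁻ y, g y ∂ν := by
  rcases Nat.eq_zero_or_pos N with rfl | hN
  · have : {y | ∃ n : ℕ, 1 ≤ n ∧ n ≤ 0 ∧ lam * (n : ℝ≥0∞) ^ d ≤ ∑ k ∈ Fbox d n, g (S k y)} = ∅ := by
      ext y; simp
    rw [this]; simp
  set E := {y | ∃ n : ℕ, 1 ≤ n ∧ n ≤ N ∧ lam * (n : ℝ≥0∞) ^ d ≤ ∑ k ∈ Fbox d n, g (S k y)} with hE
  have hmeas : ∀ k, Measurable (fun y => g (S k y)) := fun k => hg.comp (hS k).measurable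
  have hEm : MeasurableSet E := by
    have : E = ⋃ n : ℕ, ⋃ (_ : 1 ≤ n), ⋃ (_ : n ≤ N),
        {y | lam * (n : ℝ≥0∞) ^ d ≤ ∑ k ∈ Fbox d n, g (S k y)} := by
      ext y; simp [hE]; exact exists_congr fun n => by tauto
    rw [this]
    refine MeasurableSet.iUnion fun n => MeasurableSet.iUnion fun _ => MeasurableSet.iUnion fun _ => ?_
    exact measurableSet_le measurable_const (Finset.measurable_sum _ fun k _ => hmeas k)
  have key : ∀ y, lam * ∑ i ∈ Fbox d N, E.indicator (fun _ => (1 : ℝ≥0∞)) (S i y)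
      ≤ 2 ^ d * ∑ k ∈ Fbox d (2 * N), g (S k y) := by
    intro y
    set J := (Fbox d N).filter (fun i => S i y ∈ E) with hJ
    have hsum : ∑ i ∈ Fbox d N, E.indicator (fun _ => (1 : ℝ≥0∞)) (S i y) = (J.card : ℝ≥0∞) := by
      simp [Set.indicator_apply, hJ]
    rw [hsum]
    have hex : ∀ i, ∃ n : ℕ, i ∈ J → (1 ≤ n ∧ n ≤ N ∧
        lam * (n : ℝ≥0∞) ^ d ≤ ∑ k ∈ Fbox d n, g (S (k + i) y)) := by
      intro i
      by_cases hi : i ∈ J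
      · obtain ⟨n, h⟩ := (Finset.mem_filter.1 hi).2
        refine ⟨n, fun _ => ?_⟩
        simpa [hadd] using h
      · exact ⟨0, fun h => absurd h hi⟩
    choose n hn using hex
    refine (cover_aux d (fun k => g (S k y)) lam n J (fun i hi => (hn i hi).1)
      (fun i hi => (hn i hi).2.2)).trans ?_
    gcongr
    intro k hk
    simp only [Finset.mem_biUnion, Finset.mem_image, Fbox_mem] at hk
    obtain ⟨i, hi, p, hp, rfl⟩ := hk
    rw [Fbox_mem]
    intro c
    have a1 := hp c
    have a2 := (Fbox_mem.1 (Finset.mem_filter.1 hi).1) c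
    have a3 := (hn i hi).2.1
    simp only [Pi.add_apply]
    push_cast
    constructor <;> omega
  have hIntg := lintegral_mono (μ := ν) key
  rw [lintegral_const_mul, lintegral_const_mul, lintegral_finsetSum, lintegral_finsetSum] at hIntg
  · have e1 : ∀ i, ∫⁻ y, E.indicator (fun _ => (1 : ℝ≥0∞)) (S i y) ∂ν = ν E := by
      intro i
      rw [(hS i).lintegral_comp (measurable_const.indicator hEm)]
      simp [lintegral_indicator hEm]
    have e2 : ∀ i, ∫⁻ y, g (S i y) ∂ν = ∫⁻ y, g y ∂ν := fun i => (hS i).lintegral_comp hg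
    simp only [e1, e2, Finset.sum_const, Fbox_card, nsmul_eq_mul] at hIntg
    push_cast at hIntg
    have hN0 : ((N : ℝ≥0∞) ^ d) ≠ 0 := by simp; omega
    have hNt : ((N : ℝ≥0∞) ^ d) ≠ ⊤ := by simp
    have h4 : (4 : ℝ≥0∞) ^ d = 2 ^ d * 2 ^ d := by rw [← mul_pow]; norm_num
    rw [← ENNReal.mul_le_mul_iff_right hN0 hNt]
    calc _ = lam * ((N : ℝ≥0∞) ^ d * ν E) := by ring
      _ ≤ _ := hIntg
      _ = _ := by rw [h4, mul_pow]; ring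
  all_goals first
    | exact fun k _ => hmeas k
    | exact fun k _ => (measurable_const.indicator hEm).comp (hS k).measurable
    | exact Finset.measurable_sum _ fun k _ => hmeas k
    | exact Finset.measurable_sum _ fun k _ => (measurable_const.indicator hEm).comp (hS k).measurable

lemma maximal_all {d : ℕ} (ν : Measure Y) (S : (Fin d → ℤ) → Y → Y)
    (hS : ∀ j, MeasurePreserving (S j) ν ν) (hadd : ∀ i j, S (i + j) = S i ∘ S j)
    (g : Y → ℝ≥0∞) (hg : Measurable g) (lam : ℝ≥0∞) :
    lam * ν {y | ∃ n : ℕ, 1 ≤ n ∧ lam * (n : ℝ≥0∞) ^ d ≤ ∑ k ∈ Fbox d n, g (S k y)}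
      ≤ 4 ^ d * ∫⁻ y, g y ∂ν := by
  have hU : {y | ∃ n : ℕ, 1 ≤ n ∧ lam * (n : ℝ≥0∞) ^ d ≤ ∑ k ∈ Fbox d n, g (S k y)} =
      ⋃ N : ℕ, {y | ∃ n : ℕ, 1 ≤ n ∧ n ≤ N ∧ lam * (n : ℝ≥0∞) ^ d ≤ ∑ k ∈ Fbox d n, g (S k y)} := by
    ext y
    simp only [Set.mem_ofPred_eq, Set.mem_iUnion]
    constructor
    · rintro ⟨n, h1, h2⟩; exact ⟨n, n, h1, le_rfl, h2⟩
    · rintro ⟨N, n, h1, _, h2⟩; exact ⟨n, h1, h2⟩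
  rw [hU, Monotone.measure_iUnion, ENNReal.mul_iSup]
  · exact iSup_le fun N => maximal_N ν S hS hadd g hg lam N
  · intro N M hNM y
    rintro ⟨n, h1, h2, h3⟩
    exact ⟨n, h1, h2.trans hNM, h3⟩


/-- Ergodic averages along boxes. -/
def bavg {d : ℕ} (S : (Fin d → ℤ) → Y → Y) (g : Y → ℝ) (n : ℕ) (y : Y) : ℝ :=
  (∑ j ∈ Fbox d n, g (S j y)) / ((Fbox d n).card : ℝ)

lemma bavg_add {d : ℕ} (S : (Fin d → ℤ) → Y → Y) (g h : Y → ℝ) (n : ℕ) (y : Y) :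
    bavg S (g + h) n y = bavg S g n y + bavg S h n y := by
  simp [bavg, Finset.sum_add_distrib, add_div]

lemma bavg_smul {d : ℕ} (S : (Fin d → ℤ) → Y → Y) (a : ℝ) (h : Y → ℝ) (n : ℕ) (y : Y) :
    bavg S (a • h) n y = a * bavg S h n y := by
  simp [bavg, ← Finset.mul_sum, mul_div_assoc]

lemma box_shift {d : ℕ} (a : (Fin d → ℤ) → ℝ) (C : ℝ) (hC : ∀ k, |a k| ≤ C) (j : Fin d → ℤ) :
    Tendsto (fun n : ℕ => (∑ i ∈ Fbox d n, (a (j + i) - a i)) / ((Fbox d n).card : ℝ))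
      atTop (𝓝 0) := by
  set m : ℕ := ∑ c, (j c).natAbs with hm
  have hjm : ∀ c, (j c).natAbs ≤ m := fun c =>
    Finset.single_le_sum (f := fun c => (j c).natAbs) (fun _ _ => Nat.zero_le _) (Finset.mem_univ c)
  have hC0 : 0 ≤ C := (abs_nonneg _).trans (hC 0)
  have bound : ∀ n : ℕ, m ≤ n → |∑ i ∈ Fbox d n, (a (j + i) - a i)| ≤
      2 * C * ((n : ℝ) ^ d - ((n : ℝ) - m) ^ d) := by
    intro n hmn
    set P := (Fbox d n).image (fun i => j + i) with hP
    set p : Fin d → ℤ := fun c => max (j c) 0 with hp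
    set K := (Fbox d (n - m)).image (fun i => p + i) with hK
    have hKP : K ⊆ P := by
      intro k hk
      simp only [hK, Finset.mem_image, Fbox_mem] at hk
      obtain ⟨i, hi, rfl⟩ := hk
      simp only [hP, Finset.mem_image, Fbox_mem]
      refine ⟨p + i - j, ?_, by abel⟩
      intro c
      have h1 := hi c
      have h2 := hjm c
      simp only [hp, Pi.add_apply, Pi.sub_apply]
      constructor <;> omega
    have hKF : K ⊆ Fbox d n := by
      intro k hk
      simp only [hK, Finset.mem_image, Fbox_mem] at hk
      obtain ⟨i, hi, rfl⟩ := hk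
      rw [Fbox_mem]
      intro c
      have h1 := hi c
      have h2 := hjm c
      simp only [hp, Pi.add_apply]
      constructor <;> omega
    have hPc : P.card = n ^ d := by
      rw [hP, Finset.card_image_of_injective _ (add_right_injective j), Fbox_card]
    have hKc : K.card = (n - m) ^ d := by
      rw [hK, Finset.card_image_of_injective _ (add_right_injective p), Fbox_card]
    have hsum : ∑ i ∈ Fbox d n, (a (j + i) - a i) = ∑ i ∈ P \ K, a i - ∑ i ∈ Fbox d n \ K, a i := by
      have e1 : ∑ i ∈ Fbox d n, a (j + i) = ∑ i ∈ P, a i :=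
        (Finset.sum_image (f := a) (g := fun i => j + i)
          (fun x _ y _ h => add_right_injective j h)).symm
      have e2 := Finset.sum_sdiff (f := a) hKF
      have e3 := Finset.sum_sdiff (f := a) hKP
      rw [Finset.sum_sub_distrib, e1]
      linarith
    have hb : ∀ Q : Finset (Fin d → ℤ), K ⊆ Q → Q.card = n ^ d →
        |∑ i ∈ Q \ K, a i| ≤ C * ((n : ℝ) ^ d - ((n : ℝ) - m) ^ d) := by
      intro Q hQ hQc
      calc _ ≤ ∑ i ∈ Q \ K, |a i| := Finset.abs_sum_le_sum_abs _ _
        _ ≤ ∑ i ∈ Q \ K, C := Finset.sum_le_sum fun i _ => hC i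
        _ = _ := by
          rw [Finset.sum_const, nsmul_eq_mul, Finset.cast_card_sdiff hQ, hQc, hKc]
          push_cast [Nat.cast_sub hmn]; ring
    rw [hsum]
    have b1 := hb P hKP hPc
    have b2 := hb (Fbox d n) hKF (Fbox_card d n)
    calc _ ≤ |∑ i ∈ P \ K, a i| + |∑ i ∈ Fbox d n \ K, a i| := abs_sub _ _
      _ ≤ _ := by linarith
  have hlim : Tendsto (fun n : ℕ => 2 * C * (1 - (1 - (m : ℝ) / n) ^ d)) atTop (𝓝 0) := by
    have h1 : Tendsto (fun n : ℕ => (m : ℝ) / n) atTop (𝓝 0) :=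
      tendsto_const_div_atTop_nhds_zero_nat _
    have := ((((tendsto_const_nhds (x := (1 : ℝ))).sub h1).pow d).const_sub 1).const_mul (2 * C)
    simpa using this
  refine squeeze_zero_norm' ?_ hlim
  filter_upwards [eventually_ge_atTop (m + 1)] with n hn
  have hn0 : (0 : ℝ) < n := by exact_mod_cast (by omega : 0 < n)
  rw [Real.norm_eq_abs, abs_div, Fbox_card]
  push_cast
  rw [abs_of_pos (by positivity : (0 : ℝ) < (n : ℝ) ^ d), div_le_iff₀ (by positivity)]
  refine (bound n (by omega)).trans (le_of_eq ?_)
  have : (1 - (m : ℝ) / n) ^ d * (n : ℝ) ^ d = ((n : ℝ) - m) ^ d := by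
    rw [← mul_pow]; congr 1; field_simp
  rw [mul_assoc (2 * C), sub_mul, this, one_mul]

/-- Functions that are negligible for the averages. -/
def Cob {d : ℕ} (ν : Measure Y) (S : (Fin d → ℤ) → Y → Y) (c : Y → ℝ) : Prop :=
  Measurable c ∧ Integrable c ν ∧ ∫ y, c y ∂ν = 0 ∧
    ∀ y, Tendsto (fun n => bavg S c n y) atTop (𝓝 0)

lemma Cob.add {d : ℕ} {ν : Measure Y} {S : (Fin d → ℤ) → Y → Y} {c c' : Y → ℝ}
    (h : Cob ν S c) (h' : Cob ν S c') : Cob ν S (c + c') := by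
  obtain ⟨a1, a2, a3, a4⟩ := h
  obtain ⟨b1, b2, b3, b4⟩ := h'
  refine ⟨a1.add b1, a2.add b2, ?_, fun y => ?_⟩
  · simp only [Pi.add_apply]
    rw [integral_add a2 b2, a3, b3, add_zero]
  · simp only [bavg_add]
    simpa using (a4 y).add (b4 y)

lemma Cob.smul {d : ℕ} {ν : Measure Y} {S : (Fin d → ℤ) → Y → Y} {c : Y → ℝ}
    (a : ℝ) (h : Cob ν S c) : Cob ν S (a • c) := by
  obtain ⟨a1, a2, a3, a4⟩ := h
  refine ⟨a1.const_smul a, a2.smul a, ?_, fun y => ?_⟩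
  · simp only [Pi.smul_apply]
    rw [integral_smul, a3, smul_zero]
  · simp only [bavg_smul]
    simpa using (a4 y).const_mul a

lemma Cob.zero {d : ℕ} {ν : Measure Y} {S : (Fin d → ℤ) → Y → Y} :
    Cob ν S 0 := by
  refine ⟨measurable_zero, integrable_zero _ _ _, by simp, fun y => by simp [bavg]⟩

lemma Cob.shift {d : ℕ} {ν : Measure Y} [IsProbabilityMeasure ν] {S : (Fin d → ℤ) → Y → Y}
    (hS : ∀ j, MeasurePreserving (S j) ν ν) (hadd : ∀ i j, S (i + j) = S i ∘ S j)
    (s : SimpleFunc Y ℝ) (j : Fin d → ℤ) : Cob ν S (s ∘ S j - s) := by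
  obtain ⟨C, hC⟩ := s.exists_forall_norm_le
  have i1 : Integrable s ν := s.integrable_of_isFiniteMeasure
  have i2 : Integrable (s ∘ S j) ν := (hS j).integrable_comp_of_integrable i1
  refine ⟨(s.measurable.comp (hS j).measurable).sub s.measurable, i2.sub i1, ?_, fun y => ?_⟩
  · simp only [Pi.sub_apply]
    rw [integral_sub i2 i1]
    have : ∫ y, (s ∘ S j) y ∂ν = ∫ y, s y ∂ν := by
      have e := integral_map (μ := ν) (hS j).measurable.aemeasurable (f := s)
        s.stronglyMeasurable.aestronglyMeasurable
      rw [(hS j).map_eq] at e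
      exact e.symm
    rw [this, sub_self]
  · have := box_shift (fun k => s (S k y)) C (fun k => hC _) j
    simpa [bavg, hadd] using this

lemma invariant_rep {d : ℕ} {ν : Measure Y} {S : (Fin d → ℤ) → Y → Y}
    (hS : ∀ j, MeasurePreserving (S j) ν ν) (hadd : ∀ i j, S (i + j) = S i ∘ S j)
    (v : Y → ℝ) (hv : Measurable v) (hinv : ∀ j, v ∘ S j =ᵐ[ν] v) :
    ∃ φ : Y → ℝ, Measurable φ ∧ (∀ j y, φ (S j y) = φ y) ∧ φ =ᵐ[ν] v := by
  set Z : Set Y := {y | ∀ i, v (S i y) = v (S 0 y)} with hZ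
  have hZm : MeasurableSet Z := by
    have : Z = ⋂ i, {y | v (S i y) = v (S 0 y)} := by ext y; simp [hZ]
    rw [this]
    exact MeasurableSet.iInter fun i =>
      measurableSet_eq_fun (hv.comp (hS i).measurable) (hv.comp (hS 0).measurable)
  have hcomp : ∀ i j y, S i (S j y) = S (i + j) y := fun i j y => by rw [hadd]; rfl
  have hZinv : ∀ j y, S j y ∈ Z ↔ y ∈ Z := by
    intro j y
    simp only [hZ, Set.mem_ofPred_eq, hcomp]
    constructor
    · intro h i
      have h1 := h (i - j)
      have h2 := h (0 - j)
      rw [sub_add_cancel] at h1 h2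
      rw [h1, h2]
    · intro h i
      rw [h, h (0 + j)]
  refine ⟨Z.indicator (v ∘ S 0), (hv.comp (hS 0).measurable).indicator hZm, ?_, ?_⟩
  · intro j y
    by_cases hy : y ∈ Z
    · rw [Set.indicator_of_mem ((hZinv j y).2 hy), Set.indicator_of_mem hy]
      simp only [Function.comp, hcomp]
      exact hy _
    · rw [Set.indicator_of_notMem (fun h => hy ((hZinv j y).1 h)), Set.indicator_of_notMem hy]
  · filter_upwards [ae_all_iff.2 hinv] with y hy
    have : y ∈ Z := by
      intro i
      have h1 := hy i
      have h2 := hy 0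
      simp only [Function.comp] at h1 h2
      rw [h1, h2]
    rw [Set.indicator_of_mem this, hy 0]

lemma dense_aux {d : ℕ} {ν : Measure Y} [IsProbabilityMeasure ν] {S : (Fin d → ℤ) → Y → Y}
    (hS : ∀ j, MeasurePreserving (S j) ν ν) (hadd : ∀ i j, S (i + j) = S i ∘ S j)
    (f : Y → ℝ) (hf : Integrable f ν) (δ : ℝ≥0∞) (hδ : δ ≠ 0) :
    ∃ φ c : Y → ℝ, Measurable φ ∧ Integrable φ ν ∧ (∀ j y, φ (S j y) = φ y) ∧ Cob ν S c ∧
      eLpNorm (f - φ - c) 1 ν ≤ δ := by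
  have h2 : δ / 2 ≠ 0 := by simp [hδ]
  obtain ⟨s0, hs0, -⟩ := (memLp_one_iff_integrable.2 hf).exists_simpleFunc_eLpNorm_sub_lt
    (by simp) h2
  have hs0L : MemLp s0 2 ν := s0.memLp_of_isFiniteMeasure 2 ν
  let N : Submodule ℝ (Lp ℝ 2 ν) :=
    { carrier := {u | ∃ c, Cob ν S c ∧ (u : Y → ℝ) =ᵐ[ν] c}
      add_mem' := by
        rintro u u' ⟨c, hc, h⟩ ⟨c', hc', h'⟩
        exact ⟨c + c', hc.add hc', (Lp.coeFn_add u u').trans (h.add h')⟩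
      zero_mem' := ⟨0, Cob.zero, Lp.coeFn_zero _ _ _⟩
      smul_mem' := by
        rintro a u ⟨c, hc, h⟩
        exact ⟨a • c, hc.smul a, (Lp.coeFn_smul a u).trans (h.const_smul a)⟩ }
  let K := N.topologicalClosure
  have : CompleteSpace K := N.isClosed_topologicalClosure.completeSpace_coe
  let u : Lp ℝ 2 ν := hs0L.toLp s0
  let v : Lp ℝ 2 ν := u - K.starProjection u
  have hvN : v ∈ Nᗮ := by
    rw [← Submodule.orthogonal_closure]
    exact Submodule.sub_starProjection_mem_orthogonal u
  have hort : ∀ j (w : Lp ℝ 2 ν),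
      inner ℝ v (Lp.compMeasurePreserving (S j) (hS j) w - w) = 0 := by
    intro j
    have hcl : IsClosed {w : Lp ℝ 2 ν |
        inner ℝ v (Lp.compMeasurePreserving (S j) (hS j) w - w) = 0} := by
      refine isClosed_eq ?_ continuous_const
      exact continuous_const.inner
        (((Lp.isometry_compMeasurePreserving (hS j)).continuous).sub continuous_id)
    intro w
    refine (Lp.simpleFunc.denseRange (E := ℝ) (p := 2) (μ := ν) (by simp)).induction_on w hcl ?_
    intro s
    rw [← Submodule.mem_orthogonal_singleton_iff_inner_right]
    refine (Submodule.mem_orthogonal_singleton_iff_inner_left).2 ?_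
    refine hvN _ ⟨_, Cob.shift hS hadd (Lp.simpleFunc.toSimpleFunc s) j, ?_⟩
    have e1 := Lp.simpleFunc.toSimpleFunc_eq_toFun s
    have e2 := (hS j).quasiMeasurePreserving.ae_eq_comp e1
    filter_upwards [Lp.coeFn_sub (Lp.compMeasurePreserving (S j) (hS j) (s : Lp ℝ 2 ν)) s,
      Lp.coeFn_compMeasurePreserving (s : Lp ℝ 2 ν) (hS j), e1, e2] with y h1 h2 h3 h4
    rw [h1, Pi.sub_apply, h2, Pi.sub_apply, h3, h4]
  have hvinv : ∀ j, (v : Y → ℝ) ∘ S j =ᵐ[ν] v := by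
    intro j
    have h0 : Lp.compMeasurePreserving (S j) (hS j) v - v = 0 := by
      have hn := Lp.norm_compMeasurePreserving v (hS j)
      have ho := hort j v
      rw [← norm_eq_zero, ← sq_eq_zero_iff, norm_sub_sq_real, hn, real_inner_comm]
      rw [inner_sub_right, real_inner_self_eq_norm_sq] at ho
      linarith
    have h1 := Lp.coeFn_compMeasurePreserving v (hS j)
    rw [sub_eq_zero.1 h0] at h1
    exact h1.symm
  obtain ⟨φ, hφm, hφi, hφv⟩ := invariant_rep hS hadd v (Lp.stronglyMeasurable v).measurable hvinv
  have hPu : K.starProjection u ∈ closure (N : Set (Lp ℝ 2 ν)) := by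
    have := K.starProjection_apply_mem u
    rwa [← N.topologicalClosure_coe]
  obtain ⟨w, ⟨c, hc, hwc⟩, hw⟩ := EMetric.mem_closure_iff.1 hPu (δ / 2) (pos_iff_ne_zero.2 h2)
  refine ⟨φ, c, hφm, ?_, hφi, hc, ?_⟩
  · exact ((memLp_one_iff_integrable.1
      ((Lp.memLp v).mono_exponent (by norm_num)))).congr hφv.symm
  · have e : f - φ - c =ᵐ[ν] (f - s0) + ((K.starProjection u : Lp ℝ 2 ν) - (w : Y → ℝ)) := by
      filter_upwards [hφv, hwc, Lp.coeFn_sub u (K.starProjection u), hs0L.coeFn_toLp]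
        with y h1 h2 h3 h4
      simp only [Pi.sub_apply, Pi.add_apply] at *
      rw [h1, ← h2, show (v : Y → ℝ) y = _ from h3, show (u : Y → ℝ) y = _ from h4]
      ring
    rw [eLpNorm_congr_ae e]
    refine (eLpNorm_add_le (hf.1.sub s0.stronglyMeasurable.aestronglyMeasurable)
      ((Lp.aestronglyMeasurable _).sub (Lp.aestronglyMeasurable _)) le_rfl).trans ?_
    rw [← ENNReal.add_halves δ]
    gcongr
    refine (eLpNorm_le_eLpNorm_of_exponent_le (by norm_num : (1 : ℝ≥0∞) ≤ 2)
      ((Lp.aestronglyMeasurable _).sub (Lp.aestronglyMeasurable _))).trans ?_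
    rw [← Lp.edist_def]
    exact hw.le


lemma eventually_close {d : ℕ} {ν : Measure Y} [IsProbabilityMeasure ν] {S : (Fin d → ℤ) → Y → Y}
    (hS : ∀ j, MeasurePreserving (S j) ν ν) (hadd : ∀ i j, S (i + j) = S i ∘ S j)
    (f : Y → ℝ) (hfm : Measurable f) (hf : Integrable f ν) (η : ℝ) (hη : 0 < η) :
    ∃ φ : Y → ℝ, Measurable φ ∧ Integrable φ ν ∧ (∀ j y, φ (S j y) = φ y) ∧
      |∫ y, f y ∂ν - ∫ y, φ y ∂ν| ≤ η ∧
      ν {y | ¬ ∀ᶠ n in atTop, |bavg S f n y - φ y| ≤ η} ≤ ENNReal.ofReal η := by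
  set δ : ℝ := min η (η / 2 * η / 4 ^ d) with hδdef
  have hδ : 0 < δ := lt_min hη (by positivity)
  obtain ⟨φ, c, hφm, hφI, hφi, ⟨hcm, hcI, hc0, hct⟩, hr⟩ :=
    dense_aux hS hadd f hf (ENNReal.ofReal δ) (by simpa using hδ)
  refine ⟨φ, hφm, hφI, hφi, ?_, ?_⟩
  · set r := f - φ - c with hrdef
    have hrI : Integrable r ν := (hf.sub hφI).sub hcI
    have e : ∫ y, r y ∂ν = ∫ y, f y ∂ν - ∫ y, φ y ∂ν := by
      rw [hrdef, integral_sub' (hf.sub hφI) hcI, integral_sub' hf hφI, hc0, sub_zero]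
    rw [← e]
    have h1 : ‖∫ y, r y ∂ν‖ₑ ≤ ENNReal.ofReal δ := by
      refine (enorm_integral_le_lintegral_enorm r).trans ?_
      rwa [← eLpNorm_one_eq_lintegral_enorm]
    rw [← Real.norm_eq_abs]
    rw [← ofReal_norm, ENNReal.ofReal_le_ofReal_iff hδ.le] at h1
    exact h1.trans (min_le_left _ _)
  · set r := f - φ - c with hrdef
    have hrm : Measurable (fun y => ‖r y‖ₑ) := ((hfm.sub hφm).sub hcm).enorm
    have hmax := maximal_all ν S hS hadd (fun y => ‖r y‖ₑ) hrm (ENNReal.ofReal (η / 2))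
    have hle : ν {y | ¬ ∀ᶠ n in atTop, |bavg S f n y - φ y| ≤ η} ≤
        ν {y | ∃ n : ℕ, 1 ≤ n ∧ ENNReal.ofReal (η / 2) * (n : ℝ≥0∞) ^ d ≤
          ∑ k ∈ Fbox d n, ‖r (S k y)‖ₑ} := by
      apply measure_mono
      intro y hy
      by_contra hcon
      apply hy
      simp only [Set.mem_ofPred_eq, not_exists, not_and, not_le] at hcon
      have hcy := (Metric.tendsto_atTop.1 (hct y)) (η / 2) (by positivity)
      obtain ⟨N, hN⟩ := hcy
      filter_upwards [eventually_ge_atTop (max N 1)] with n hn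
      have h1 := hN n (le_of_max_le_left hn)
      have h1n : 1 ≤ n := le_of_max_le_right hn
      have hnpos : (0 : ℝ) < (n : ℝ) ^ d := by positivity
      rw [Real.dist_eq, sub_zero] at h1
      have h2 := hcon n h1n
      have hsum : bavg S f n y = φ y + bavg S c n y + bavg S r n y := by
        have e1 : f = φ + c + r := by simp [hrdef]
        have e2 : bavg S φ n y = φ y := by
          simp only [bavg, hφi, Finset.sum_const, nsmul_eq_mul, Fbox_card]
          push_cast
          field_simp
        conv_lhs => rw [e1]
        rw [bavg_add, bavg_add, e2]
      have h3 : |bavg S r n y| ≤ η / 2 := by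
        have h4 : ∑ k ∈ Fbox d n, ‖r (S k y)‖ < η / 2 * (n : ℝ) ^ d := by
          rw [← ENNReal.ofReal_lt_ofReal_iff (by positivity), ENNReal.ofReal_mul (by positivity),
            ENNReal.ofReal_pow (by positivity), ENNReal.ofReal_natCast,
            ENNReal.ofReal_sum_of_nonneg (fun _ _ => norm_nonneg _)]
          simpa only [ofReal_norm] using h2
        rw [bavg, abs_div, Fbox_card]
        push_cast
        rw [abs_of_pos hnpos, div_le_iff₀ hnpos]
        exact (Finset.abs_sum_le_sum_abs _ _).trans h4.le
      rw [hsum]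
      have h5 := abs_add_le (bavg S c n y) (bavg S r n y)
      have : φ y + bavg S c n y + bavg S r n y - φ y = bavg S c n y + bavg S r n y := by ring
      rw [this]
      linarith
    refine hle.trans ?_
    have hr' : ∫⁻ y, ‖r y‖ₑ ∂ν ≤ ENNReal.ofReal (η / 2 * η / 4 ^ d) := by
      rw [← eLpNorm_one_eq_lintegral_enorm]
      exact hr.trans (ENNReal.ofReal_le_ofReal (min_le_right _ _))
    have h6 : (4 : ℝ≥0∞) ^ d * ENNReal.ofReal (η / 2 * η / 4 ^ d) =
        ENNReal.ofReal (η / 2) * ENNReal.ofReal η := by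
      have : (4 : ℝ≥0∞) ^ d = ENNReal.ofReal (4 ^ d) := by
        rw [ENNReal.ofReal_pow (by norm_num)]; norm_num
      rw [this, ← ENNReal.ofReal_mul (by positivity), ← ENNReal.ofReal_mul (by positivity)]
      congr 1
      field_simp
    have h7 := hmax.trans ((mul_le_mul_right hr' (4 ^ d)).trans_eq h6)
    rwa [ENNReal.mul_le_mul_iff_right (by simpa using hη) (by simp)] at h7

lemma null_of_small {ν : Measure Y} {B : Set Y} {ε : ℝ} (hε : 0 < ε)
    (h : ∀ η, 0 < η → η ≤ ε → ν B ≤ ENNReal.ofReal η) : ν B = 0 := by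
  refine le_antisymm ?_ zero_le
  refine ENNReal.le_of_forall_pos_le_add fun t ht _ => ?_
  refine (h (min t ε) (lt_min (by exact_mod_cast ht) hε) (min_le_right _ _)).trans ?_
  rw [zero_add]
  refine (ENNReal.ofReal_le_ofReal (min_le_left _ _)).trans ?_
  simp

theorem ergodic_conv {d : ℕ} {ν : Measure Y} [IsProbabilityMeasure ν] {S : (Fin d → ℤ) → Y → Y}
    (hS : ∀ j, MeasurePreserving (S j) ν ν) (hadd : ∀ i j, S (i + j) = S i ∘ S j)
    (f : Y → ℝ) (hfm : Measurable f) (hf : Integrable f ν) :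
    ∀ᵐ y ∂ν, ∃ l, Tendsto (fun n => bavg S f n y) atTop (𝓝 l) := by
  have key : ∀ k : ℕ, ∀ᵐ y ∂ν, ∃ l : ℝ, ∀ᶠ n in atTop, |bavg S f n y - l| ≤ 1 / ((k : ℝ) + 1) := by
    intro k
    rw [ae_iff]
    refine null_of_small (ε := 1 / ((k : ℝ) + 1)) (by positivity) fun η hη hle => ?_
    obtain ⟨φ, -, -, -, -, h⟩ := eventually_close hS hadd f hfm hf η hη
    refine (measure_mono ?_).trans h
    intro y hy hcon
    exact hy ⟨φ y, hcon.mono fun n hn => hn.trans hle⟩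
  filter_upwards [ae_all_iff.2 key] with y hy
  refine cauchySeq_tendsto_of_complete ?_
  rw [Metric.cauchySeq_iff']
  intro ε hε
  obtain ⟨k, hk⟩ := exists_nat_one_div_lt (half_pos hε)
  obtain ⟨l, hl⟩ := hy k
  obtain ⟨N, hN⟩ := eventually_atTop.1 hl
  refine ⟨N, fun n hn => ?_⟩
  have h1 := abs_le.1 (hN n hn)
  have h2 := abs_le.1 (hN N le_rfl)
  rw [Real.dist_eq, abs_lt]
  constructor <;> linarith

theorem ergodic_erg {d : ℕ} {ν : Measure Y} [IsProbabilityMeasure ν] {S : (Fin d → ℤ) → Y → Y}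
    (hS : ∀ j, MeasurePreserving (S j) ν ν) (hadd : ∀ i j, S (i + j) = S i ∘ S j)
    (herg : ∀ A : Set Y, MeasurableSet A → (∀ j, S j ⁻¹' A = A) → ν A = 0 ∨ ν A = 1)
    (f : Y → ℝ) (hfm : Measurable f) (hf : Integrable f ν) :
    ∀ᵐ y ∂ν, Tendsto (fun n => bavg S f n y) atTop (𝓝 (∫ y, f y ∂ν)) := by
  have key : ∀ k : ℕ, ∀ᵐ y ∂ν, ∀ᶠ n in atTop,
      |bavg S f n y - ∫ y, f y ∂ν| ≤ 1 / ((k : ℝ) + 1) := by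
    intro k
    rw [ae_iff]
    refine null_of_small (ε := 1 / ((k : ℝ) + 1) / 2) (by positivity) fun η hη hle => ?_
    obtain ⟨φ, hφm, hφI, hφi, hIntg, h⟩ := eventually_close hS hadd f hfm hf η hη
    obtain ⟨a, ha⟩ : ∃ a, φ =ᵐ[ν] Function.const Y a := by
      refine exists_eventuallyEq_const_of_forall_separating MeasurableSet fun U hU => ?_
      have hU' : MeasurableSet (φ ⁻¹' U) := hφm hU
      rcases herg (φ ⁻¹' U) hU' (fun j => by ext y; simp [hφi]) with h0 | h1
      · right
        exact measure_eq_zero_iff_ae_notMem.1 h0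
      · left
        exact (prob_compl_eq_zero_iff hU').2 h1
    have hia : ∫ y, φ y ∂ν = a := by
      rw [integral_congr_ae ha]; simp
    rw [hia] at hIntg
    have hle2 : ν {y | ¬ ∀ᶠ n in atTop, |bavg S f n y - ∫ y, f y ∂ν| ≤ 1 / ((k : ℝ) + 1)} ≤
        ν {y | ¬ ∀ᶠ n in atTop, |bavg S f n y - φ y| ≤ η} := by
      apply measure_mono_ae
      filter_upwards [ha] with y hy h1 hcon
      apply h1
      filter_upwards [hcon] with n hn
      rw [hy, Function.const_apply] at hn
      rw [abs_le] at *
      constructor <;> linarith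
    exact hle2.trans h
  filter_upwards [ae_all_iff.2 key] with y hy
  rw [Metric.tendsto_nhds]
  intro ε hε
  obtain ⟨k, hk⟩ := exists_nat_one_div_lt hε
  filter_upwards [hy k] with n hn
  rw [Real.dist_eq]
  linarith


lemma not_sens_AP {d : ℕ} (μ : Measure Y) [IsProbabilityMeasure μ]
    (T : (Fin d → ℤ) → Y → Y)
    (hT : ∀ j, MeasurePreserving (T j) μ μ)
    (hTadd : ∀ i j, T (i + j) = T i ∘ T j)
    (herg : ∀ A : Set Y, MeasurableSet A → (∀ j, T j ⁻¹' A = A) → μ A = 0 ∨ μ A = 1)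
    (f : Y → ℂ) (hfm : Measurable f) (hf : MemLp f 2 μ) (hns : ¬ MeanSensitiveFun μ T f) :
    APFun μ T f := by
  set O : Set (Lp ℂ 2 μ) := {g : Lp ℂ 2 μ | ∃ j : Fin d → ℤ, (g : Y → ℂ) =ᵐ[μ] f ∘ T j} with hO
  suffices hTB : TotallyBounded O from
    isCompact_iff_totallyBounded_isComplete.2 ⟨hTB.closure, isClosed_closure.isComplete⟩
  have hL : ∀ j, MemLp (f ∘ T j) 2 μ := fun j => hf.comp_measurePreserving (hT j)
  have hmj : ∀ j, Measurable (f ∘ T j) := fun j => hfm.comp (hT j).measurable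
  rw [Metric.totallyBounded_iff]
  intro ε hε
  have hnS : ¬ SensitivityConstant μ T f (ε / 2) := fun h => hns ⟨_, h⟩
  simp only [SensitivityConstant, not_and, not_forall, not_exists] at hnS
  obtain ⟨A, hA, hApos, hAprop⟩ := hnS (half_pos hε)
  have good1 : ∀ᵐ x ∂μ, ∀ j r, Tendsto (fun n => bavg T (fun x => ‖f (T j x) - f (T r x)‖ ^ 2) n x)
      atTop (𝓝 (∫ x, ‖f (T j x) - f (T r x)‖ ^ 2 ∂μ)) := by
    rw [ae_all_iff]; intro j
    rw [ae_all_iff]; intro r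
    refine ergodic_erg hT hTadd herg _ (((hmj j).sub (hmj r)).norm.pow_const 2) ?_
    exact (memLp_two_iff_integrable_sq_norm ((hL j).sub (hL r)).1).1 ((hL j).sub (hL r))
  have good2 : ∀ᵐ x ∂μ, ∀ j, genericSq μ T f (T j x) := by
    rw [ae_all_iff]; intro j
    refine (hT j).quasiMeasurePreserving.ae ?_
    exact ergodic_erg hT hTadd herg _ (hfm.norm.pow_const 2)
      ((memLp_two_iff_integrable_sq_norm hf.1).1 hf)
  -- a maximal almost disjoint family of translates
  let P : Finset (Fin d → ℤ) → Prop := fun R =>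
    (R : Set (Fin d → ℤ)).Pairwise (fun r r' => AEDisjoint μ (T r ⁻¹' A) (T r' ⁻¹' A))
  have hmA : ∀ r, MeasurableSet (T r ⁻¹' A) := fun r => (hT r).measurable hA
  have hPcard : ∀ R, P R → (R.card : ℝ) ≤ 1 / (μ A).toReal := by
    intro R hR
    have h1 : μ (⋃ r ∈ R, T r ⁻¹' A) = ∑ r ∈ R, μ (T r ⁻¹' A) :=
      measure_biUnion_finset₀ hR fun r _ => (hmA r).nullMeasurableSet
    have h2 : ∀ r, μ (T r ⁻¹' A) = μ A := fun r => (hT r).measure_preimage hA.nullMeasurableSet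
    simp only [h2, Finset.sum_const, nsmul_eq_mul] at h1
    have h3 : (R.card : ℝ≥0∞) * μ A ≤ 1 := h1 ▸ prob_le_one
    have h4 := ENNReal.toReal_mono (by simp) h3
    rw [ENNReal.toReal_mul] at h4
    have h5 : 0 < (μ A).toReal := ENNReal.toReal_pos hApos.ne' (measure_ne_top _ _)
    rw [le_div_iff₀ h5]
    simpa using h4
  obtain ⟨R, hR, hRmax⟩ : ∃ R, P R ∧ ∀ R', P R' → R'.card ≤ R.card := by
    let Q : Set ℕ := {k | ∃ R, P R ∧ R.card = k}
    have hne : Q.Nonempty := ⟨0, ∅, by simp [P], by simp⟩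
    have hbd : BddAbove Q := by
      refine ⟨⌊1 / (μ A).toReal⌋₊, ?_⟩
      rintro k ⟨R, hR, rfl⟩
      exact Nat.le_floor (hPcard R hR)
    obtain ⟨R, hR, hc⟩ := Nat.sSup_mem hne hbd
    exact ⟨R, hR, fun R' hR' => hc ▸ le_csSup hbd ⟨R', hR', rfl⟩⟩
  refine ⟨(fun r => (hL r).toLp (f ∘ T r)) '' (R : Set (Fin d → ℤ)), R.finite_toSet.image _, ?_⟩
  rintro g ⟨j, hj⟩
  have hgj : g = (hL j).toLp (f ∘ T j) := Lp.ext (hj.trans (hL j).coeFn_toLp.symm)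
  simp only [Set.mem_iUnion]
  by_cases hjR : j ∈ R
  · exact ⟨_, Set.mem_image_of_mem _ hjR, by rw [hgj]; exact Metric.mem_ball_self hε⟩
  have hex : ∃ r ∈ R, ¬ AEDisjoint μ (T j ⁻¹' A) (T r ⁻¹' A) := by
    by_contra! hcon
    have hP' : P (insert j R) := by
      simp only [P, Finset.coe_insert]
      refine hR.insert fun r hr _ => ⟨hcon r hr, (hcon r hr).symm⟩
    have := hRmax _ hP'
    rw [Finset.card_insert_of_notMem hjR] at this
    omega
  obtain ⟨r, hr, hnd⟩ := hex
  refine ⟨_, Set.mem_image_of_mem _ hr, ?_⟩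
  have hfr : ∃ᵐ x ∂μ, x ∈ T j ⁻¹' A ∩ T r ⁻¹' A := by
    rwa [frequently_ae_mem_iff]
  obtain ⟨x, ⟨hxj, hxr⟩, hx1, hx2⟩ := (hfr.and_eventually (good1.and good2)).exists
  have hdF : dF T f (T j x) (T r x) = Real.sqrt (∫ x, ‖f (T j x) - f (T r x)‖ ^ 2 ∂μ) := by
    have hcomm : ∀ i k y, T i (T k y) = T k (T i y) := by
      intro i k y
      have h1 := congrFun (hTadd i k) y
      have h2 := congrFun (hTadd k i) y
      rw [add_comm] at h2
      exact h1.symm.trans h2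
    have := ((Real.continuous_sqrt.tendsto _).comp (hx1 j r)).limsup_eq
    rw [← this]
    unfold dF bavg
    congr 1
    funext n
    simp only [Function.comp]
    congr 2
    refine Finset.sum_congr rfl fun i _ => ?_
    rw [hcomm i j, hcomm i r]
  have hle : dF T f (T j x) (T r x) ≤ ε / 2 := by
    by_contra hcon
    exact hAprop (T j x) hxj (T r x) hxr (hx2 j) (hx2 r) (not_le.1 hcon)
  rw [Metric.mem_ball, hgj]
  have hdist : dist ((hL j).toLp (f ∘ T j)) ((hL r).toLp (f ∘ T r)) =
      Real.sqrt (∫ x, ‖f (T j x) - f (T r x)‖ ^ 2 ∂μ) := by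
    rw [dist_eq_norm, ← MemLp.toLp_sub, Lp.norm_toLp,
      MemLp.eLpNorm_eq_integral_rpow_norm (by simp) (by simp) ((hL j).sub (hL r)),
      ENNReal.toReal_ofReal (by positivity), Real.sqrt_eq_rpow]
    simp
  rw [hdist, ← hdF]
  linarith


lemma lintegral_sq_le {μ : Measure Y} {u : Y → ℂ} {δ : ℝ} (hδ : 0 ≤ δ)
    (h : eLpNorm u 2 μ ≤ ENNReal.ofReal δ) :
    ∫⁻ x, ENNReal.ofReal (‖u x‖ ^ 2) ∂μ ≤ ENNReal.ofReal (δ ^ 2) := by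
  have e := eLpNorm_nnreal_pow_eq_lintegral (f := u) (μ := μ) (p := 2) (by norm_num)
  have e1 : ∀ x, ENNReal.ofReal (‖u x‖ ^ 2) = ‖u x‖ₑ ^ ((2 : NNReal) : ℝ) := by
    intro x
    rw [ENNReal.ofReal_pow (norm_nonneg _), ofReal_norm]
    simp
  simp only [e1]
  rw [← e, ENNReal.ofReal_pow hδ]
  simp only [NNReal.coe_ofNat, ENNReal.rpow_ofNat, ENNReal.coe_ofNat]
  gcongr

/-- For a mean sensitive function, the averages on the square stay away from zero. -/
lemma sens_prod {d : ℕ} (μ : Measure Y) [IsProbabilityMeasure μ]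
    (T : (Fin d → ℤ) → Y → Y)
    (hT : ∀ j, MeasurePreserving (T j) μ μ)
    (hTadd : ∀ i j, T (i + j) = T i ∘ T j)
    (f : Y → ℂ) (hfm : Measurable f) (hf : MemLp f 2 μ) (ε : ℝ)
    (hs : SensitivityConstant μ T f ε) :
    ∀ᵐ p ∂(μ.prod μ), ENNReal.ofReal (ε ^ 2 / 4) ≤
      liminf (fun n => ENNReal.ofReal (bavg (fun j => Prod.map (T j) (T j))
        (fun p : Y × Y => ‖f p.1 - f p.2‖ ^ 2) n p)) atTop := by
  set S : (Fin d → ℤ) → Y × Y → Y × Y := fun j => Prod.map (T j) (T j) with hSdef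
  set G : Y × Y → ℝ := fun p => ‖f p.1 - f p.2‖ ^ 2 with hG
  have hS : ∀ j, MeasurePreserving (S j) (μ.prod μ) (μ.prod μ) := fun j => (hT j).prod (hT j)
  have hSadd : ∀ i j, S (i + j) = S i ∘ S j := by
    intro i j
    simp only [hSdef, hTadd, Prod.map_comp_map]
  have hGm : Measurable G :=
    ((hfm.comp measurable_fst).sub (hfm.comp measurable_snd)).norm.pow_const 2
  have hGI : Integrable G (μ.prod μ) := by
    have h1 : MemLp (f ∘ Prod.fst - f ∘ Prod.snd) 2 (μ.prod μ) :=
      (hf.comp_measurePreserving measurePreserving_fst).sub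
        (hf.comp_measurePreserving measurePreserving_snd)
    exact (memLp_two_iff_integrable_sq_norm h1.1).1 h1
  have hDm : ∀ n, Measurable (bavg S G n) := fun n =>
    (Finset.measurable_sum _ fun j _ => hGm.comp (hS j).measurable).div_const _
  set c := ε ^ 2 / 4 with hc
  set W : Set (Y × Y) := {p | ∀ᶠ n in atTop, bavg S G n p ≤ c} with hW
  have hWm : MeasurableSet W := by
    have : W = ⋃ N : ℕ, ⋂ n : ℕ, ⋂ (_ : N ≤ n), {p | bavg S G n p ≤ c} := by
      ext p; simp [hW]
    rw [this]
    exact MeasurableSet.iUnion fun N => MeasurableSet.iInter fun n => MeasurableSet.iInter fun _ =>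
      measurableSet_le (hDm n) measurable_const
  have hWnull : (μ.prod μ) W = 0 := by
    rw [Measure.measure_prod_null hWm]
    refine Filter.Eventually.of_forall fun x => ?_
    by_contra hpos
    have hAm : MeasurableSet (Prod.mk x ⁻¹' W) := measurable_prodMk_left hWm
    obtain ⟨y, hy, y', hy', -, -, hlt⟩ := hs.2 _ hAm (pos_iff_ne_zero.2 hpos)
    apply not_le.2 hlt
    have hy1 : ∀ᶠ n in atTop, bavg S G n (x, y) ≤ c := hy
    have hy2 : ∀ᶠ n in atTop, bavg S G n (x, y') ≤ c := hy'
    unfold dF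
    refine limsup_le_of_le ?_ ?_
    · exact isCoboundedUnder_le_of_le atTop (x := 0) fun n => Real.sqrt_nonneg _
    · filter_upwards [hy1, hy2] with n h1 h2
      rw [Real.sqrt_le_left hs.1.le]
      have h3 : (∑ j ∈ Fbox d n, ‖f (T j y) - f (T j y')‖ ^ 2) / ((Fbox d n).card : ℝ) ≤
          2 * bavg S G n (x, y) + 2 * bavg S G n (x, y') := by
        unfold bavg
        rw [← mul_div_assoc, ← mul_div_assoc, ← add_div, Finset.mul_sum, Finset.mul_sum,
          ← Finset.sum_add_distrib]
        gcongr with j hj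
        simp only [hG, hSdef, Prod.map_apply]
        have h4 : ‖f (T j y) - f (T j y')‖ ≤ ‖f (T j x) - f (T j y)‖ + ‖f (T j x) - f (T j y')‖ := by
          rw [norm_sub_rev (f (T j x)) (f (T j y))]
          exact norm_sub_le_norm_sub_add_norm_sub _ _ _
        nlinarith [norm_nonneg (f (T j y) - f (T j y')), sq_nonneg
          (‖f (T j x) - f (T j y)‖ - ‖f (T j x) - f (T j y')‖)]
      refine h3.trans ?_
      rw [hc] at h1 h2
      linarith
  filter_upwards [measure_eq_zero_iff_ae_notMem.1 hWnull, ergodic_conv hS hSadd G hGm hGI]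
    with p hp ⟨l, hl⟩
  have hcl : c ≤ l := by
    by_contra hlt
    exact hp ((hl.eventually (eventually_lt_nhds (not_le.1 hlt))).mono fun n hn => hn.le)
  have hl' := (ENNReal.continuous_ofReal.tendsto l).comp hl
  have := hl'.liminf_eq
  refine (ENNReal.ofReal_le_ofReal hcl).trans ?_
  rw [← this]
  rfl

lemma AP_not_sens {d : ℕ} (μ : Measure Y) [IsProbabilityMeasure μ]
    (T : (Fin d → ℤ) → Y → Y)
    (hT : ∀ j, MeasurePreserving (T j) μ μ)
    (hTadd : ∀ i j, T (i + j) = T i ∘ T j)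
    (f : Y → ℂ) (hfm : Measurable f) (hf : MemLp f 2 μ) (hap : APFun μ T f) :
    ¬ MeanSensitiveFun μ T f := by
  rintro ⟨ε, hs⟩
  have hε := hs.1
  have hlow := sens_prod μ T hT hTadd f hfm hf ε hs
  set S : (Fin d → ℤ) → Y × Y → Y × Y := fun j => Prod.map (T j) (T j) with hSdef
  set G : Y × Y → ℝ := fun p => ‖f p.1 - f p.2‖ ^ 2 with hG
  have hS : ∀ j, MeasurePreserving (S j) (μ.prod μ) (μ.prod μ) := fun j => (hT j).prod (hT j)
  have hGm : Measurable G :=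
    ((hfm.comp measurable_fst).sub (hfm.comp measurable_snd)).norm.pow_const 2
  have hDm : ∀ n, Measurable (bavg S G n) := fun n =>
    (Finset.measurable_sum _ fun j _ => hGm.comp (hS j).measurable).div_const _
  have hL : ∀ j, MemLp (f ∘ T j) 2 μ := fun j => hf.comp_measurePreserving (hT j)
  set δ : ℝ := ε / 8 with hδdef
  have hδ : 0 < δ := by positivity
  -- finite nets of simple functions
  have hTB := hap.totallyBounded.subset subset_closure
  obtain ⟨t, htf, ht⟩ := Metric.totallyBounded_iff.1 hTB (δ / 2) (by positivity)
  have hsimple : ∀ u : Lp ℂ 2 μ, ∃ s : SimpleFunc Y ℂ,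
      eLpNorm ((u : Y → ℂ) - ⇑s) 2 μ < ENNReal.ofReal (δ / 2) := by
    intro u
    obtain ⟨s, h, -⟩ := (Lp.memLp u).exists_simpleFunc_eLpNorm_sub_lt (by simp)
      (ε := ENNReal.ofReal (δ / 2)) (by simpa using hδ)
    exact ⟨s, h⟩
  choose s hsapp using hsimple
  have hnet : ∀ j, ∃ u : t, eLpNorm (f ∘ T j - ⇑(s u)) 2 μ ≤ ENNReal.ofReal δ := by
    intro j
    have hm := ht ⟨j, (hL j).coeFn_toLp⟩
    simp only [Set.mem_iUnion] at hm
    obtain ⟨u, hu, hd⟩ := hm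
    refine ⟨⟨u, hu⟩, ?_⟩
    have e : f ∘ T j - ⇑(s u) =ᵐ[μ] ((((hL j).toLp (f ∘ T j) : Lp ℂ 2 μ) : Y → ℂ) - u)
        + ((u : Y → ℂ) - ⇑(s u)) := by
      filter_upwards [(hL j).coeFn_toLp] with x hx
      simp only [Pi.sub_apply, Pi.add_apply, hx]
      ring
    simp only
    rw [eLpNorm_congr_ae e]
    refine (eLpNorm_add_le ((Lp.aestronglyMeasurable _).sub (Lp.aestronglyMeasurable _))
      ((Lp.aestronglyMeasurable _).sub (s u).stronglyMeasurable.aestronglyMeasurable)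
      (by norm_num)).trans ?_
    have h2 : ENNReal.ofReal δ = ENNReal.ofReal (δ / 2) + ENNReal.ofReal (δ / 2) := by
      rw [← ENNReal.ofReal_add (by positivity) (by positivity)]; congr 1; ring
    rw [h2]
    gcongr
    · rw [← Lp.edist_def, edist_dist]
      exact ENNReal.ofReal_le_ofReal (le_of_lt hd)
    · exact (hsapp u).le
  choose uj huj using hnet
  have : Finite t := htf
  have : Fintype t := Fintype.ofFinite t
  set κ : Y → (t → ℂ) := fun x u => s u x with hκ
  have hκm : Measurable κ := measurable_pi_lambda _ fun u => (s u).measurable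
  have hκf : (Set.range κ).Finite := by
    refine (Set.Finite.pi' (fun u : t => (s u).finite_range)).subset ?_
    rintro _ ⟨x, rfl⟩ u
    exact ⟨x, rfl⟩
  set V := hκf.toFinset with hV
  set A : (t → ℂ) → Set Y := fun v => κ ⁻¹' {v} with hA
  have hAm : ∀ v, MeasurableSet (A v) := fun v => hκm (measurableSet_singleton v)
  have hAdisj : Set.PairwiseDisjoint (V : Set (t → ℂ)) A := by
    intro v _ w _ hvw
    exact Disjoint.preimage κ (by simpa using hvw)
  have hAun : (⋃ v ∈ V, A v) = Set.univ := by
    ext x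
    simp [hA, hV]
  -- the remainder averages
  set Φ : ℕ → Y → ℝ := fun n x =>
    (∑ j ∈ Fbox d n, ‖(f ∘ T j - ⇑(s (uj j))) x‖ ^ 2) / ((Fbox d n).card : ℝ) with hΦ
  have hΦ0 : ∀ n x, 0 ≤ Φ n x := fun n x => by simp only [hΦ]; positivity
  have hrm : ∀ j, Measurable (fun x => ‖(f ∘ T j - ⇑(s (uj j))) x‖ ^ 2) := fun j =>
    ((hfm.comp (hT j).measurable).sub (s (uj j)).measurable).norm.pow_const 2
  have hΦm : ∀ n, Measurable (Φ n) := fun n =>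
    (Finset.measurable_sum _ fun j _ => hrm j).div_const _
  have hΦint : ∀ n, ∫⁻ x, ENNReal.ofReal (Φ n x) ∂μ ≤ ENNReal.ofReal (δ ^ 2) := by
    intro n
    have e : ∀ x, ENNReal.ofReal (Φ n x) = ENNReal.ofReal ((Fbox d n).card : ℝ)⁻¹ *
        ∑ j ∈ Fbox d n, ENNReal.ofReal (‖(f ∘ T j - ⇑(s (uj j))) x‖ ^ 2) := by
      intro x
      rw [← ENNReal.ofReal_sum_of_nonneg (fun _ _ => by positivity),
        ← ENNReal.ofReal_mul (by positivity)]
      congr 1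
      simp only [hΦ]
      ring
    simp only [e]
    rw [lintegral_const_mul _ (Finset.measurable_sum _ fun j _ => (hrm j).ennreal_ofReal),
      lintegral_finsetSum _ (fun j _ => (hrm j).ennreal_ofReal)]
    calc _ ≤ ENNReal.ofReal ((Fbox d n).card : ℝ)⁻¹ *
          ∑ j ∈ Fbox d n, ENNReal.ofReal (δ ^ 2) := by
          gcongr with j hj
          exact lintegral_sq_le hδ.le (huj j)
      _ = ENNReal.ofReal (((Fbox d n).card : ℝ)⁻¹ * ((Fbox d n).card : ℝ)) *
          ENNReal.ofReal (δ ^ 2) := by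
          rw [Finset.sum_const, nsmul_eq_mul, ENNReal.ofReal_mul (by positivity),
            ENNReal.ofReal_natCast, mul_assoc]
      _ ≤ 1 * ENNReal.ofReal (δ ^ 2) := by
          gcongr
          rw [ENNReal.ofReal_le_one]
          exact inv_mul_le_one
      _ = _ := one_mul _
  have hcell : ∀ n x y, κ x = κ y → bavg S G n (x, y) ≤ 2 * Φ n x + 2 * Φ n y := by
    intro n x y hxy
    simp only [bavg, hΦ]
    rw [← mul_div_assoc, ← mul_div_assoc, ← add_div, Finset.mul_sum, Finset.mul_sum,
      ← Finset.sum_add_distrib]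
    gcongr with j hj
    simp only [hG, hSdef, Prod.map_apply, Pi.sub_apply, Function.comp]
    have h1 : s (uj j) x = s (uj j) y := congrFun hxy (uj j)
    have h4 : ‖f (T j x) - f (T j y)‖ ≤ ‖f (T j x) - s (uj j) x‖ + ‖f (T j y) - s (uj j) y‖ := by
      rw [h1, norm_sub_rev (f (T j y)) (s (uj j) y)]
      exact norm_sub_le_norm_sub_add_norm_sub _ _ _
    nlinarith [norm_nonneg (f (T j x) - f (T j y)), sq_nonneg
      (‖f (T j x) - s (uj j) x‖ - ‖f (T j y) - s (uj j) y‖)]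
  -- the weighted measure
  set m : Measure (Y × Y) := ∑ v ∈ V, (μ (A v))⁻¹ • (μ.restrict (A v)).prod (μ.restrict (A v))
    with hm
  have hcellint : ∀ n v, ∫⁻ p, ENNReal.ofReal (bavg S G n p)
      ∂((μ.restrict (A v)).prod (μ.restrict (A v))) ≤
      μ (A v) * (4 * ∫⁻ x in A v, ENNReal.ofReal (Φ n x) ∂μ) := by
    intro n v
    have hmm : Measurable (fun x => ENNReal.ofReal (Φ n x)) := (hΦm n).ennreal_ofReal
    rw [Measure.prod_restrict]
    calc _ ≤ ∫⁻ p in A v ×ˢ A v, (2 * ENNReal.ofReal (Φ n p.1) + 2 * ENNReal.ofReal (Φ n p.2))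
            ∂(μ.prod μ) := by
          refine setLIntegral_mono' ((hAm v).prod (hAm v)) ?_
          rintro ⟨x, y⟩ ⟨hx, hy⟩
          have hxy : κ x = κ y := (show κ x = v from hx).trans (show κ y = v from hy).symm
          refine (ENNReal.ofReal_le_ofReal (hcell n x y hxy)).trans ?_
          have h0 := hΦ0 n x
          have h0' := hΦ0 n y
          rw [ENNReal.ofReal_add (by positivity) (by positivity), ENNReal.ofReal_mul (by norm_num),
            ENNReal.ofReal_mul (by norm_num)]
          simp
      _ = _ := by
          rw [← Measure.prod_restrict, lintegral_prod _ (by fun_prop)]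
          simp only
          have e1 : ∀ x, ∫⁻ y in A v, (2 * ENNReal.ofReal (Φ n x) + 2 * ENNReal.ofReal (Φ n y)) ∂μ
              = 2 * ENNReal.ofReal (Φ n x) * μ (A v) +
                2 * ∫⁻ y in A v, ENNReal.ofReal (Φ n y) ∂μ := by
            intro x
            rw [lintegral_add_left measurable_const, lintegral_const, lintegral_const_mul _ hmm]
            simp
          simp only [e1]
          rw [lintegral_add_right _ measurable_const, lintegral_const,
            lintegral_mul_const _ (hmm.const_mul 2), lintegral_const_mul _ hmm]
          simp only [Measure.restrict_apply MeasurableSet.univ, Set.univ_inter]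
          ring
  have hup : ∀ n, ∫⁻ p, ENNReal.ofReal (bavg S G n p) ∂m ≤ 4 * ENNReal.ofReal (δ ^ 2) := by
    intro n
    rw [hm, lintegral_finsetSum_measure]
    simp only [lintegral_smul_measure, smul_eq_mul]
    calc _ ≤ ∑ v ∈ V, 4 * ∫⁻ x in A v, ENNReal.ofReal (Φ n x) ∂μ := by
          refine Finset.sum_le_sum fun v _ => ?_
          refine (mul_le_mul_right (hcellint n v) _).trans ?_
          rw [← mul_assoc]
          exact mul_le_of_le_one_left zero_le (ENNReal.inv_mul_le_one _)
      _ = 4 * ∫⁻ x, ENNReal.ofReal (Φ n x) ∂μ := by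
          rw [← Finset.mul_sum, ← lintegral_biUnion_finset hAdisj (fun v _ => hAm v), hAun,
            Measure.restrict_univ]
      _ ≤ _ := by gcongr; exact hΦint n
  have hmuniv : m Set.univ = 1 := by
    rw [hm]
    simp only [Measure.coe_finset_sum, Finset.sum_apply, Measure.smul_apply, smul_eq_mul]
    have e : ∀ v, (μ (A v))⁻¹ * ((μ.restrict (A v)).prod (μ.restrict (A v))) Set.univ
        = μ (A v) := by
      intro v
      rw [← Set.univ_prod_univ, Measure.prod_prod]
      simp only [Measure.restrict_apply MeasurableSet.univ, Set.univ_inter]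
      by_cases h0 : μ (A v) = 0
      · simp [h0]
      · rw [← mul_assoc, ENNReal.inv_mul_cancel h0 (measure_ne_top _ _), one_mul]
    simp only [e]
    rw [← measure_biUnion_finset hAdisj (fun v _ => hAm v), hAun, measure_univ]
  have hmac : m ≪ μ.prod μ := by
    refine Measure.AbsolutelyContinuous.mk fun B hB hB0 => ?_
    rw [hm]
    simp only [Measure.coe_finset_sum, Finset.sum_apply, Measure.smul_apply, smul_eq_mul]
    refine Finset.sum_eq_zero fun v _ => ?_
    rw [Measure.prod_restrict]
    rw [le_antisymm ((Measure.restrict_apply_le _ _).trans hB0.le) zero_le, mul_zero]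
  have hfat := lintegral_liminf_le (μ := m) (u := atTop)
    (f := fun n p => ENNReal.ofReal (bavg S G n p)) (fun n => (hDm n).ennreal_ofReal)
  have h1 : ENNReal.ofReal (ε ^ 2 / 4) ≤ 4 * ENNReal.ofReal (δ ^ 2) := by
    calc ENNReal.ofReal (ε ^ 2 / 4) = ∫⁻ p, ENNReal.ofReal (ε ^ 2 / 4) ∂m := by
          rw [lintegral_const, hmuniv, mul_one]
      _ ≤ _ := lintegral_mono_ae (hmac.ae_le hlow)
      _ ≤ _ := hfat
      _ ≤ liminf (fun _ : ℕ => 4 * ENNReal.ofReal (δ ^ 2)) atTop :=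
          liminf_le_liminf (Eventually.of_forall hup)
      _ = _ := by simp
  have h2 : (4 : ℝ≥0∞) * ENNReal.ofReal (δ ^ 2) = ENNReal.ofReal (4 * δ ^ 2) := by
    rw [ENNReal.ofReal_mul (by norm_num)]; simp
  rw [h2, ENNReal.ofReal_le_ofReal_iff (by positivity), hδdef] at h1
  nlinarith [sq_pos_of_pos hε]


lemma sens_congr {d : ℕ} (μ : Measure Y) [IsProbabilityMeasure μ]
    (T : (Fin d → ℤ) → Y → Y) (hT : ∀ j, MeasurePreserving (T j) μ μ)
    (f g : Y → ℂ) (hfg : f =ᵐ[μ] g) (h : MeanSensitiveFun μ T f) : MeanSensitiveFun μ T g := by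
  obtain ⟨ε, hε, h⟩ := h
  refine ⟨ε, hε, fun A hA hApos => ?_⟩
  have hae : ∀ᵐ x ∂μ, ∀ j, f (T j x) = g (T j x) :=
    ae_all_iff.2 fun j => (hT j).quasiMeasurePreserving.ae hfg
  obtain ⟨N, hNsub, hNm, hN0⟩ := exists_measurable_superset_of_null (ae_iff.1 hae)
  have hgood : ∀ x, x ∉ N → ∀ j, f (T j x) = g (T j x) := by
    intro x hx
    by_contra hcon
    exact hx (hNsub hcon)
  have hpos : 0 < μ (A \ N) := by rwa [measure_sdiff_null hN0]
  obtain ⟨x, hx, y, hy, h1, h2, h3⟩ := h (A \ N) (hA.diff hNm) hpos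
  have ex := hgood x hx.2
  have ey := hgood y hy.2
  have hIntg : ∫ y, ‖f y‖ ^ 2 ∂μ = ∫ y, ‖g y‖ ^ 2 ∂μ := by
    refine integral_congr_ae ?_
    filter_upwards [hfg] with x hx
    rw [hx]
  unfold genericSq at h1 h2
  unfold dF at h3
  simp only [ex, ey, hIntg] at h1 h2 h3
  exact ⟨x, hx.1, y, hy.1, h1, h2, h3⟩

lemma AP_congr {d : ℕ} (μ : Measure Y)
    (T : (Fin d → ℤ) → Y → Y) (hT : ∀ j, MeasurePreserving (T j) μ μ)
    (f g : Y → ℂ) (hfg : f =ᵐ[μ] g) : APFun μ T f ↔ APFun μ T g := by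
  have h : ∀ j, f ∘ T j =ᵐ[μ] g ∘ T j := fun j => (hT j).quasiMeasurePreserving.ae_eq_comp hfg
  have e : {u : Lp ℂ 2 μ | ∃ j : Fin d → ℤ, (u : Y → ℂ) =ᵐ[μ] f ∘ T j} =
      {u : Lp ℂ 2 μ | ∃ j : Fin d → ℤ, (u : Y → ℂ) =ᵐ[μ] g ∘ T j} := by
    ext u
    exact exists_congr fun j => ⟨fun k => k.trans (h j), fun k => k.trans (h j).symm⟩
  unfold APFun
  rw [e]

/-- for an ergodic MPS, `H_ap^c = H_ms`: `f ∈ L²` is almost periodic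
iff it is not `μ`-mean sensitive. -/
theorem stmt1 {d : ℕ}
    [MeasurableSpace X] (μ : Measure X) [IsProbabilityMeasure μ]
    (T : (Fin d → ℤ) → X → X)
    (hT : ∀ j, MeasurePreserving (T j) μ μ)
    (hTadd : ∀ i j, T (i + j) = T i ∘ T j)
    (herg : ∀ A : Set X, MeasurableSet A → (∀ j, T j ⁻¹' A = A) → μ A = 0 ∨ μ A = 1)
    (f : X → ℂ) (hf : MemLp f 2 μ) :
    APFun μ T f ↔ ¬ MeanSensitiveFun μ T f := by
  have hfg := hf.1.ae_eq_mk
  have hgm : Measurable (hf.1.mk f) := hf.1.stronglyMeasurable_mk.measurable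
  have hgL : MemLp (hf.1.mk f) 2 μ := hf.ae_eq hfg
  rw [AP_congr μ T hT f _ hfg]
  constructor
  · intro h hs
    exact AP_not_sens μ T hT hTadd _ hgm hgL h (sens_congr μ T hT _ _ hfg hs)
  · intro h
    exact not_sens_AP μ T hT hTadd herg _ hgm hgL
      fun hs => h (sens_congr μ T hT _ _ hfg.symm hs)
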